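/- q-Leibniz formula (left version): let A be an associative k-algebra, a, b in A, q, ζ in k and r ≥ 1. Then [a^r, b]_{q^r} = Σ_{i=0}^{r-1} q^i · binom(r,i)_ζ · [a, ⋯[a, [a, b]_q]_{qζ} ⋯]_{qζ^{r-i-1}} · a^i, where the iterated commutator has r - i occurrences of a. -/

import Mathlib

/-- The `q`-commutator `[a,b]_q := a*b - q • (b*a)`. -/
def qComm {k A : Type*} [Field k] [Ring A] [Algebra k A] (q : k) (a b : A) : A :=
  a * b - q • (b * a)

/-- The Gaussian (`ζ`-)binomial coefficient `binom(n,i)_ζ`, i.e. the evaluation at `ζ`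
of the Gaussian binomial polynomial, defined via the `q`-Pascal recursion. -/
def qBinom {k : Type*} [Field k] (ζ : k) : ℕ → ℕ → k
  | _, 0 => 1
  | 0, _ + 1 => 0
  | n + 1, i + 1 => ζ ^ (i + 1) * qBinom ζ n (i + 1) + qBinom ζ n i

/-- The iterated `q`-commutator `[a, ⋯[a, [a, b]_q]_{qζ} ⋯]_{qζ^{m-1}}`
with `m` occurrences of `a`. -/
def qCommIterLeft {k A : Type*} [Field k] [Ring A] [Algebra k A]
    (q ζ : k) (a b : A) : ℕ → A
  | 0 => b
  | m + 1 => qComm (q * ζ ^ m) a (qCommIterLeft q ζ a b m)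

theorem qBinom_zero_right {k : Type*} [Field k] (ζ : k) (n : ℕ) : qBinom ζ n 0 = 1 := by
  cases n <;> simp [qBinom]

theorem qBinom_eq_zero_of_lt {k : Type*} [Field k] (ζ : k) {n i : ℕ} (h : n < i) :
    qBinom ζ n i = 0 := by
  induction n generalizing i with
  | zero =>
    obtain ⟨i, rfl⟩ := Nat.exists_eq_succ_of_ne_zero h.ne'
    simp [qBinom]
  | succ n ih =>
    obtain ⟨i, rfl⟩ := Nat.exists_eq_succ_of_ne_zero (Nat.ne_zero_of_lt h)
    simp [qBinom, ih (show n < i by omega), ih (show n < i + 1 by omega)]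

theorem qBinom_self {k : Type*} [Field k] (ζ : k) (n : ℕ) : qBinom ζ n n = 1 := by
  induction n with
  | zero => simp [qBinom]
  | succ n ih => simp [qBinom, ih, qBinom_eq_zero_of_lt ζ n.lt_succ_self]

theorem qCommIterLeft_qComm {k A : Type*} [Field k] [Ring A] [Algebra k A]
    (q ζ : k) (a b : A) (m : ℕ) :
    qCommIterLeft (q * ζ) ζ a (qComm q a b) m = qCommIterLeft q ζ a b (m + 1) := by
  induction m with
  | zero => simp [qCommIterLeft]
  | succ m ih =>
    rw [qCommIterLeft, ih, qCommIterLeft.eq_2 q ζ a b (m + 1), pow_succ', mul_assoc]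

/-- Moving `a ^ r` to the right past `b` produces iterated `q`-commutators. -/
theorem pow_mul_eq_sum_qCommIterLeft {k A : Type*} [Field k] [Ring A] [Algebra k A]
    (a b : A) (q ζ : k) (r : ℕ) :
    a ^ r * b =
      ∑ i ∈ Finset.range (r + 1),
        (q ^ i * qBinom ζ r i) • (qCommIterLeft q ζ a b (r - i) * a ^ i) := by
  induction r generalizing b q with
  | zero => simp [qBinom, qCommIterLeft]
  | succ r ih =>
    have hstep : a ^ (r + 1) * b = a ^ r * qComm q a b + q • (a ^ r * b * a) := by
      simp only [qComm, mul_sub, mul_smul_comm, pow_succ, mul_assoc, sub_add_cancel]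
    have hfirst : a ^ r * qComm q a b = ∑ i ∈ Finset.range (r + 2),
        ((q * ζ) ^ i * qBinom ζ r i) • (qCommIterLeft q ζ a b (r + 1 - i) * a ^ i) := by
      rw [ih (qComm q a b) (q * ζ), Finset.sum_range_succ _ (r + 1),
        qBinom_eq_zero_of_lt ζ r.lt_succ_self, mul_zero, zero_smul, add_zero]
      refine Finset.sum_congr rfl fun i hi => ?_
      rw [qCommIterLeft_qComm, Nat.succ_sub (Finset.mem_range_succ_iff.mp hi)]
    rw [hstep, hfirst, ih b q, Finset.sum_range_succ' _ (r + 1), Finset.sum_range_succ' _ (r + 1),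
      Finset.sum_mul, Finset.smul_sum, add_right_comm, ← Finset.sum_add_distrib]
    congr 1
    · refine Finset.sum_congr rfl fun i _ => ?_
      rw [Nat.add_sub_add_right, smul_mul_assoc, mul_assoc, ← pow_succ, smul_smul, ← add_smul,
        qBinom]
      congr 1
      ring
    · simp [qBinom_zero_right]

/-- The `q`-Leibniz formula (left version):
`[a^r, b]_{q^r} = Σ_{i=0}^{r-1} q^i · binom(r,i)_ζ · [a,⋯[a,[a,b]_q]_{qζ}⋯]_{qζ^{r-i-1}} · a^i`. -/
theorem qComm_pow_left {k A : Type*} [Field k] [Ring A] [Algebra k A]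
    (a b : A) (q ζ : k) (r : ℕ) (hr : 1 ≤ r) :
    qComm (q ^ r) (a ^ r) b =
      ∑ i ∈ Finset.range r,
        (q ^ i * qBinom ζ r i) • (qCommIterLeft q ζ a b (r - i) * a ^ i) := by
  rw [qComm, pow_mul_eq_sum_qCommIterLeft a b q ζ r, Finset.sum_range_succ, qBinom_self,
    Nat.sub_self, qCommIterLeft, mul_one, add_sub_cancel_right]
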